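/- Let M be a two-counter machine, Σ_M the corresponding t-ESG* basic action theory (over the fluents next, c₁, c₂, halt, with one action per instruction label, encoding the increment and decrement instructions of M via the precondition and successor-state axioms), and δ the program 'while ¬halt do πa. Poss(a)?; a done'. Then M halts (reaches the HALT instruction starting from instruction s₀ with counters c₁ = c₂ = 0) if and only if Σ_M ⊨ ¬[δ]⊥. -/

import Mathlib

/-!
Two-counter machines and the t-ESG* basic action theory `Σ_M`.

t-ESG* extends t-ESG with fluent functions of sort time together with `+`,
`-` and `<` with the intended real-number semantics.  For the reduction, the
relevant part of a t-ESG* world for the signature of `Σ_M` (the unary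
relational fluent `next`, the nullary functional time fluents `c₁`, `c₂`, the
nullary relational fluent `halt`, and the distinguished fluent `Poss`) is its
assignment of values to these fluents after every finite timed trace; timed
traces are finite sequences of (time point, action standard name) pairs, where
the actions are the instruction labels of the machine.
-/

namespace TCMRed

/-- Instructions of a two-counter machine over counters `c₁`, `c₂`
(`second = false` refers to `c₁`, `second = true` to `c₂`):
* `inc x q`: `p: x := x + 1; goto q`
* `dec x q r`: `p: if x > 0 then x := x - 1; goto q else goto r`
* `haltI`: the special instruction `HALT`. -/
inductive Instr : Type
  | inc (second : Bool) (next : ℕ)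
  | dec (second : Bool) (next jumpZero : ℕ)
  | haltI

/-- A two-counter machine: an assignment of instructions to labels, a start
label `s₀`, and the label of the special instruction `HALT`. -/
structure TCM : Type where
  prog : ℕ → Instr
  start : ℕ
  haltLbl : ℕ
  halt_spec : prog haltLbl = Instr.haltI

/-- One deterministic step of the machine on a configuration
(label, counter 1, counter 2); the machine stays put at `HALT`. -/
def TCM.step (M : TCM) : ℕ × ℕ × ℕ → ℕ × ℕ × ℕ
  | (p, n₁, n₂) =>
    match M.prog p with
    | .inc false q => (q, n₁ + 1, n₂)
    | .inc true q => (q, n₁, n₂ + 1)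
    | .dec false q r => if 0 < n₁ then (q, n₁ - 1, n₂) else (r, n₁, n₂)
    | .dec true q r => if 0 < n₂ then (q, n₁, n₂ - 1) else (r, n₁, n₂)
    | .haltI => (p, n₁, n₂)

/-- The machine halts: starting from instruction `s₀` with `c₁ = c₂ = 0`, it
reaches the instruction `HALT`. -/
def TCM.Halts (M : TCM) : Prop :=
  ∃ k : ℕ, (M.step^[k] (M.start, 0, 0)).1 = M.haltLbl

/-- Finite timed traces: (time point, action = instruction label) pairs. -/
abbrev Tr := List (ℝ × ℕ)

/-- Well-formed traces: nonnegative, monotonically nondecreasing time points. -/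
def TrWF (z : Tr) : Prop := List.Chain' (· ≤ ·) ((0 : ℝ) :: z.map Prod.fst)

/-- The fluent values of a t-ESG* world on the signature of `Σ_M`:
`next` (the next instruction), the counter values `c₁`, `c₂` (functional
fluents of sort time, interpreted over the reals), `halt`, and `Poss`. -/
structure W : Type where
  next : Tr → ℕ → Bool
  c1 : Tr → ℝ
  c2 : Tr → ℝ
  halt : Tr → Bool
  poss : Tr → ℕ → Bool

/-- `w ⊨ Σ_M`: the world satisfies the basic action theory `Σ_M`, i.e.
* `Σ₀`: initially `c₁ = 0`, `c₂ = 0` and `next(a) ≡ (a = s₀)`;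
* `Σ_pre`: `□ Poss(a) ≡ next(a)`;
* `Σ_post`: the successor state axioms, with one case per increment and
  decrement instruction of `M` (counters are incremented/decremented and the
  next instruction is updated as prescribed by the instruction executed;
  decrementation branches on whether the counter is `> 0`), and
  `□ [a] halt ≡ (a = HALT)`. -/
def Models (M : TCM) (w : W) : Prop :=
  w.c1 [] = 0 ∧ w.c2 [] = 0 ∧
  (∀ a : ℕ, w.next [] a = true ↔ a = M.start) ∧
  (∀ z : Tr, ∀ a : ℕ, w.poss z a = true ↔ w.next z a = true) ∧
  (∀ (z : Tr) (t : ℝ) (p : ℕ),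
    (w.c1 (z ++ [(t, p)]) =
      match M.prog p with
      | .inc false _ => w.c1 z + 1
      | .dec false _ _ => if 0 < w.c1 z then w.c1 z - 1 else w.c1 z
      | _ => w.c1 z) ∧
    (w.c2 (z ++ [(t, p)]) =
      match M.prog p with
      | .inc true _ => w.c2 z + 1
      | .dec true _ _ => if 0 < w.c2 z then w.c2 z - 1 else w.c2 z
      | _ => w.c2 z) ∧
    (∀ i : ℕ, w.next (z ++ [(t, p)]) i = true ↔
      (match M.prog p with
       | .inc _ q => i = q
       | .dec false q r => (0 < w.c1 z ∧ i = q) ∨ (¬ 0 < w.c1 z ∧ i = r)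
       | .dec true q r => (0 < w.c2 z ∧ i = q) ∨ (¬ 0 < w.c2 z ∧ i = r)
       | .haltI => False)) ∧
    (w.halt (z ++ [(t, p)]) = true ↔ p = M.haltLbl))

/-- A finite terminating execution trace of the program
`δ = while ¬halt do π a. Poss(a)?; a done` in the world `w`: at each step the
loop condition `¬halt` and the test `Poss(a)` of the executed action hold, and
after the trace `halt` holds (so the final test of the loop succeeds).  Thus
`w ⊨ ¬[δ]⊥` iff such a trace exists. -/
def TermTrace (M : TCM) (w : W) (z : Tr) : Prop :=
  TrWF z ∧
  (∀ (i : ℕ) (hi : i < z.length),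
    w.halt (z.take i) = false ∧ w.poss (z.take i) (z.get ⟨i, hi⟩).2 = true) ∧
  w.halt z = true

/-- The world state after `z` agrees with the machine configuration `c`. -/
def Inv (w : W) (z : Tr) (c : ℕ × ℕ × ℕ) : Prop :=
  w.c1 z = (c.2.1 : ℝ) ∧ w.c2 z = (c.2.2 : ℝ) ∧ ∀ a, w.next z a = true ↔ a = c.1

lemma Inv.step {M : TCM} {w : W} (hw : Models M w) {z : Tr} {c : ℕ × ℕ × ℕ} (h : Inv w z c)
    (hp : M.prog c.1 ≠ Instr.haltI) (t : ℝ) : Inv w (z ++ [(t, c.1)]) (M.step c) := by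
  obtain ⟨p, m, n⟩ := c
  obtain ⟨-, -, -, -, hs⟩ := hw
  obtain ⟨h1, h2, h3, -⟩ := hs z t p
  obtain ⟨i1, i2, i3⟩ := h
  simp only at i1 i2 i3 hp
  unfold Inv TCM.step
  simp only
  rw [h1, h2]
  simp only [h3, i1, i2]
  rcases hq : M.prog p with (_ | _) | ⟨_ | _, q, r⟩ | _
  · simp
  · simp
  · rcases Nat.eq_zero_or_pos m with rfl | hm
    · simp
    · have : (1 : ℕ) ≤ m := hm
      simp [hm, Nat.cast_sub this]
  · rcases Nat.eq_zero_or_pos n with rfl | hm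
    · simp
    · have : (1 : ℕ) ≤ n := hm
      simp [hm, Nat.cast_sub this]
  · exact absurd hq hp

lemma Inv.start_ok {M : TCM} {w : W} (hw : Models M w) : Inv w [] (M.start, 0, 0) := by
  obtain ⟨h1, h2, h3, -⟩ := hw
  exact ⟨by simpa using h1, by simpa using h2, h3⟩

/-- The configuration after `k` steps. -/
def cfg (M : TCM) (k : ℕ) : ℕ × ℕ × ℕ := M.step^[k] (M.start, 0, 0)

lemma cfg_succ (M : TCM) (k : ℕ) : cfg M (k + 1) = M.step (cfg M k) := by
  simp [cfg, Function.iterate_succ_apply']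

lemma step_halt (M : TCM) (c : ℕ × ℕ × ℕ) (h : M.prog c.1 = Instr.haltI) : M.step c = c := by
  obtain ⟨p, m, n⟩ := c
  simp only at h
  simp [TCM.step, h]

/-- The trace of the first `k` instructions, all at time 0. -/
def tr (M : TCM) (k : ℕ) : Tr := (List.range k).map fun i => ((0 : ℝ), (cfg M i).1)

lemma tr_succ (M : TCM) (k : ℕ) : tr M (k + 1) = tr M k ++ [(0, (cfg M k).1)] := by
  simp [tr, List.range_succ]

lemma tr_wf (M : TCM) (k : ℕ) : TrWF (tr M k) := by
  have : ((0 : ℝ) :: (tr M k).map Prod.fst) = List.replicate (k + 1) 0 := by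
    rw [List.eq_replicate_iff]
    constructor
    · simp [tr]
    · intro b hb
      simp [tr] at hb
      tauto
  unfold TrWF
  rw [this]
  exact List.isChain_replicate_of_rel _ le_rfl

lemma tr_take (M : TCM) {i k : ℕ} (h : i ≤ k) : (tr M k).take i = tr M i := by
  simp [tr, ← List.map_take, List.take_range, h]

lemma forward (M : TCM) (h : M.Halts) (w : W) (hw : Models M w) : ∃ z, TermTrace M w z := by
  classical
  by_cases h0 : w.halt [] = true
  · exact ⟨[], tr_wf M 0, by simp, h0⟩
  have h' : ∃ k, (cfg M k).1 = M.haltLbl := h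
  have hk := Nat.find_spec h'
  have hmin : ∀ j < Nat.find h', (cfg M j).1 ≠ M.haltLbl := fun j hj => Nat.find_min h' hj
  generalize Nat.find h' = k at hk hmin
  have hnh : ∀ j < k, M.prog (cfg M j).1 ≠ Instr.haltI := by
    intro j hj hh
    have : ∀ d, cfg M (j + d) = cfg M j := by
      intro d
      induction d with
      | zero => rfl
      | succ d ih => rw [← add_assoc, cfg_succ, ih, step_halt M _ hh]
    have h2 := this (k - j)
    rw [Nat.add_sub_cancel' hj.le] at h2
    exact hmin j hj (h2 ▸ hk)
  have hinv : ∀ j ≤ k, Inv w (tr M j) (cfg M j) := by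
    intro j
    induction j with
    | zero => intro _; exact Inv.start_ok hw
    | succ j ih =>
      intro hj
      rw [tr_succ, cfg_succ]
      exact (ih (by omega)).step hw (hnh j (by omega)) 0
  have hhalt : ∀ j, w.halt (tr M (j + 1)) = true ↔ (cfg M j).1 = M.haltLbl := by
    intro j
    rw [tr_succ]
    exact (hw.2.2.2.2 _ _ _).2.2.2
  refine ⟨tr M (k + 1), tr_wf M _, ?_, (hhalt k).2 hk⟩
  intro i hi
  have hi' : i < k + 1 := by simpa [tr] using hi
  rw [tr_take M hi'.le]
  constructor
  · cases i with
    | zero => simpa [tr] using h0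
    | succ j =>
      have := (hhalt j).not.2 (hmin j (by omega))
      simpa using this
  · rw [hw.2.2.2.1, (hinv i (by omega)).2.2]
    simp [tr]

lemma backward (M : TCM) (w : W) (hw : Models M w) (h0 : w.halt [] = false) (z : Tr)
    (hz : TermTrace M w z) : M.Halts := by
  obtain ⟨-, hs, hf⟩ := hz
  have htake : ∀ i (hi : i < z.length), z.take (i + 1) = z.take i ++ [z.get ⟨i, hi⟩] := by
    intro i hi
    simp
  have hact : ∀ i (hi : i < z.length), Inv w (z.take i) (cfg M i) →
      (z.get ⟨i, hi⟩).2 = (cfg M i).1 := by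
    intro i hi hI
    have := (hs i hi).2
    rwa [hw.2.2.2.1, hI.2.2] at this
  have hinv : ∀ i, i < z.length → Inv w (z.take i) (cfg M i) := by
    intro i
    induction i with
    | zero => intro _; simpa [cfg] using Inv.start_ok hw
    | succ i ih =>
      intro hi
      have hi' : i < z.length := by omega
      have hI := ih hi'
      have ha := hact i hi' hI
      have he : z.get ⟨i, hi'⟩ = ((z.get ⟨i, hi'⟩).1, (cfg M i).1) := by rw [← ha]
      have hp : M.prog (cfg M i).1 ≠ Instr.haltI := by
        intro hh
        have h1 := (hs (i + 1) hi).2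
        rw [hw.2.2.2.1, htake i hi', he, (hw.2.2.2.2 _ _ _).2.2.1, hh] at h1
        exact h1
      rw [htake i hi', he, cfg_succ]
      exact hI.step hw hp _
  rcases Nat.eq_zero_or_pos z.length with hl | hl
  · rw [List.length_eq_zero_iff] at hl
    subst hl
    simp [h0] at hf
  · have hi : z.length - 1 < z.length := by omega
    have ha := hact _ hi (hinv _ hi)
    have ht := htake _ hi
    rw [Nat.sub_add_cancel hl, List.take_length] at ht
    have he : z.get ⟨_, hi⟩ = ((z.get ⟨_, hi⟩).1, (cfg M (z.length - 1)).1) := by rw [← ha]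
    rw [he] at ht
    rw [ht, (hw.2.2.2.2 _ _ _).2.2.2] at hf
    exact ⟨_, hf⟩

/-- State of the canonical world. -/
structure St : Type where
  next : ℕ → Prop
  c1 : ℝ
  c2 : ℝ
  halt : Prop

/-- Progression of the canonical world. -/
noncomputable def St.upd (M : TCM) (s : St) (x : ℝ × ℕ) : St where
  c1 := match M.prog x.2 with
      | .inc false _ => s.c1 + 1
      | .dec false _ _ => if 0 < s.c1 then s.c1 - 1 else s.c1
      | _ => s.c1
  c2 := match M.prog x.2 with
      | .inc true _ => s.c2 + 1
      | .dec true _ _ => if 0 < s.c2 then s.c2 - 1 else s.c2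
      | _ => s.c2
  next := fun i => match M.prog x.2 with
       | .inc _ q => i = q
       | .dec false q r => (0 < s.c1 ∧ i = q) ∨ (¬ 0 < s.c1 ∧ i = r)
       | .dec true q r => (0 < s.c2 ∧ i = q) ∨ (¬ 0 < s.c2 ∧ i = r)
       | .haltI => False
  halt := x.2 = M.haltLbl

lemma exists_model (M : TCM) : ∃ w, Models M w ∧ w.halt [] = false := by
  classical
  let st : Tr → St := fun z => z.foldl (St.upd M) ⟨fun a => a = M.start, 0, 0, False⟩
  have hst : ∀ z x, st (z ++ [x]) = St.upd M (st z) x := by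
    intro z x
    simp [st]
  refine ⟨⟨fun z a => decide ((st z).next a), fun z => (st z).c1, fun z => (st z).c2,
    fun z => decide ((st z).halt), fun z a => decide ((st z).next a)⟩,
    ⟨rfl, rfl, ?_, ?_, ?_⟩, ?_⟩
  · intro a
    exact decide_eq_true_iff
  · intro z a
    rfl
  · intro z t p
    simp only [hst, decide_eq_true_eq]
    exact ⟨rfl, rfl, fun i => Iff.rfl, Iff.rfl⟩
  · exact decide_eq_false (fun h => h)

/-- Let `M` be a two-counter machine, `Σ_M` the corresponding
t-ESG* basic action theory, and `δ` the program
`while ¬halt do π a. Poss(a)?; a done`.  Then `M` halts (reaches the `HALT`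
instruction starting from instruction `s₀` with counters `c₁ = c₂ = 0`) if and
only if `Σ_M ⊨ ¬[δ]⊥`, i.e. iff every world satisfying `Σ_M` admits a finite
terminating execution of `δ`. -/
theorem tcm_halts_iff_entails_termination (M : TCM) :
    M.Halts ↔ ∀ w : W, Models M w → ∃ z : Tr, TermTrace M w z := by
  constructor
  · exact forward M
  · intro h
    obtain ⟨w, hw, h0⟩ := exists_model M
    obtain ⟨z, hz⟩ := h w hw
    exact backward M w hw h0 z hz

end TCMRed
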